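/- Let U : [-1,1] → ℝ be twice continuously differentiable, let c ∈ ℂ with Im c ≠ 0 and ∫_{−1}^{1} (U(z) − c)^{−2} dz ≠ 0, and let h : [-1,1] → ℂ be continuous. Then there exists a unique twice continuously differentiable φ : [-1,1] → ℂ with φ(−1) = φ(1) = 0 and (U(z) − c)·φ″(z) − U″(z)·φ(z) = h(z) for all z ∈ [-1,1]. -/

import Mathlib

open Set

noncomputable section

/-- Derivative within the interval `[-1,1]` (for functions on `[-1,1]`). -/
noncomputable def dI (f : ℝ → ℂ) : ℝ → ℂ := fun z => derivWithin f (Set.Icc (-1:ℝ) 1) z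

/-- Second derivative of `U` within `[-1,1]`. -/
noncomputable def ddU (U : ℝ → ℝ) : ℝ → ℝ :=
  fun z => derivWithin (fun z' => derivWithin U (Set.Icc (-1:ℝ) 1) z') (Set.Icc (-1:ℝ) 1) z

/-!
Put `w = U - c`, which does not vanish. The equation reads `(w φ' - w' φ)' = h`, and
`w φ' - w' φ = w² (φ / w)'`. Integrating twice, the solutions with `φ a = 0` are exactly
`φ = w ∫ₐ w⁻² (A + ∫ₐ h)` with a constant `A`. The condition `φ b = 0` is then an affine equation
for `A` with leading coefficient `∫ₐᵇ w⁻²`, so it determines `A` uniquely when this integral is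
nonzero.
-/

section SecondDerivative

variable {𝕜 E : Type*} [NontriviallyNormedField 𝕜] [NormedAddCommGroup E] [NormedSpace 𝕜 E]
  {s : Set 𝕜} {f f' f'' : 𝕜 → E}

theorem derivWithin_derivWithin_eqOn (hs : UniqueDiffOn 𝕜 s)
    (hf : ∀ x ∈ s, HasDerivWithinAt f (f' x) s x)
    (hf' : ∀ x ∈ s, HasDerivWithinAt f' (f'' x) s x) :
    EqOn (derivWithin (derivWithin f s) s) f'' s := by
  have hderiv : EqOn (derivWithin f s) f' s := fun x hx => (hf x hx).derivWithin (hs x hx)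
  intro x hx
  rw [derivWithin_congr hderiv (hderiv hx), (hf' x hx).derivWithin (hs x hx)]

theorem contDiffOn_two_iff_exists_hasDerivWithinAt (hs : UniqueDiffOn 𝕜 s) :
    ContDiffOn 𝕜 2 f s ↔ ∃ f' f'' : 𝕜 → E, (∀ x ∈ s, HasDerivWithinAt f (f' x) s x) ∧
      (∀ x ∈ s, HasDerivWithinAt f' (f'' x) s x) ∧ ContinuousOn f'' s := by
  constructor
  · intro hf
    have hderiv : ContDiffOn 𝕜 1 (derivWithin f s) s := hf.derivWithin hs one_add_one_eq_two.le
    exact ⟨derivWithin f s, derivWithin (derivWithin f s) s,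
      fun x hx => (hf.differentiableOn two_ne_zero x hx).hasDerivWithinAt,
      fun x hx => (hderiv.differentiableOn one_ne_zero x hx).hasDerivWithinAt,
      hderiv.continuousOn_derivWithin hs le_rfl⟩
  · rintro ⟨f', f'', hf, hf', hf''⟩
    have hderiv : EqOn (derivWithin f s) f' s := fun x hx => (hf x hx).derivWithin (hs x hx)
    have hderiv_contDiff : ContDiffOn 𝕜 1 f' s := (contDiffOn_one_iff_derivWithin hs).2
      ⟨fun x hx => (hf' x hx).differentiableWithinAt,
        hf''.congr fun x hx => (hf' x hx).derivWithin (hs x hx)⟩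
    rw [← one_add_one_eq_two, contDiffOn_succ_iff_derivWithin hs]
    exact ⟨fun x hx => (hf x hx).differentiableWithinAt, by simp, hderiv_contDiff.congr hderiv⟩

end SecondDerivative

section Primitive

variable {E : Type*} [NormedAddCommGroup E] [NormedSpace ℝ E] [CompleteSpace E] {a b x : ℝ}
  {f f' : ℝ → E}

theorem hasDerivWithinAt_integral_Icc (hf : ContinuousOn f (Icc a b)) (hx : x ∈ Icc a b) :
    HasDerivWithinAt (fun u => ∫ t in a..u, f t) (f x) (Icc a b) x := by
  have : Fact (x ∈ Icc a b) := ⟨hx⟩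
  have hint : IntervalIntegrable f MeasureTheory.volume a x :=
    (hf.mono (Icc_subset_Icc_right hx.2)).intervalIntegrable_of_Icc hx.1
  exact intervalIntegral.integral_hasDerivWithinAt_right hint
    (hf.stronglyMeasurableAtFilter_nhdsWithin measurableSet_Icc x) (hf x hx)

theorem continuousOn_integral_Icc (hf : ContinuousOn f (Icc a b)) :
    ContinuousOn (fun u => ∫ t in a..u, f t) (Icc a b) :=
  fun _ hx => (hasDerivWithinAt_integral_Icc hf hx).continuousWithinAt

theorem eq_add_integral_of_hasDerivWithinAt
    (hf : ∀ t ∈ Icc a b, HasDerivWithinAt f (f' t) (Icc a b) t)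
    (hf' : ContinuousOn f' (Icc a b)) (hx : x ∈ Icc a b) :
    f x = f a + ∫ t in a..x, f' t := by
  have hsub : Icc a x ⊆ Icc a b := Icc_subset_Icc_right hx.2
  have hcont : ContinuousOn f (Icc a x) := fun t ht =>
    ((hf t (hsub ht)).mono hsub).continuousWithinAt
  have hderiv : ∀ t ∈ Ioo a x, HasDerivAt f (f' t) t := fun t ht =>
    (hf t (hsub (Ioo_subset_Icc_self ht))).hasDerivAt (Icc_mem_nhds ht.1 (ht.2.trans_le hx.2))
  rw [intervalIntegral.integral_eq_sub_of_hasDerivAt_of_le hx.1 hcont hderiv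
    ((hf'.mono hsub).intervalIntegrable_of_Icc hx.1), add_sub_cancel]

end Primitive

section ReductionOfOrder

theorem continuousOn_inv_sq_smul {X 𝕜 E : Type*} [TopologicalSpace X] [NormedField 𝕜]
    [NormedAddCommGroup E] [NormedSpace 𝕜 E] {s : Set X} {w : X → 𝕜} {F : X → E}
    (hw : ContinuousOn w s) (hw₀ : ∀ x ∈ s, w x ≠ 0) (hF : ContinuousOn F s) :
    ContinuousOn (fun t => (w t ^ 2)⁻¹ • F t) s :=
  ((hw.pow 2).inv₀ fun x hx => pow_ne_zero 2 (hw₀ x hx)).smul hF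

variable {𝕜 E : Type*} [RCLike 𝕜] [NormedAddCommGroup E] [NormedSpace ℝ E] [NormedSpace 𝕜 E]
  {w w' w'' : ℝ → 𝕜} {F h φ φ' : ℝ → E} {a b x : ℝ}

/-- The function `φ = w ∫ₐ w⁻² F`, which vanishes at `a` and satisfies `w φ' - w' φ = F`. Reduction
of order by means of the homogeneous solution `w` writes the solutions of `w φ'' - w'' φ = F'` that
vanish at `a` in this form. -/
def reductionOfOrder (w : ℝ → 𝕜) (F : ℝ → E) (a x : ℝ) : E :=
  w x • ∫ t in a..x, (w t ^ 2)⁻¹ • F t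

/-- `φ` is a `C²` solution on `[a, b]` of the Rayleigh equation `w φ'' - w'' φ = h` with
`φ a = φ b = 0`. The Rayleigh operator of the profile `U` at wave speed `c` has `w = U - c`. -/
structure IsRayleighSolution (w : ℝ → 𝕜) (h : ℝ → E) (a b : ℝ) (φ : ℝ → E) : Prop where
  contDiffOn : ContDiffOn ℝ 2 φ (Icc a b)
  left : φ a = 0
  right : φ b = 0
  equation : ∀ x ∈ Icc a b, w x • derivWithin (derivWithin φ (Icc a b)) (Icc a b) x -
    derivWithin (derivWithin w (Icc a b)) (Icc a b) x • φ x = h x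

theorem reductionOfOrder_left : reductionOfOrder w F a a = 0 := by
  simp [reductionOfOrder]

theorem hasDerivWithinAt_wronskian [IsScalarTower ℝ 𝕜 E] {s : Set ℝ} {φ'' : ℝ → E}
    (hw : HasDerivWithinAt w (w' x) s x) (hw' : HasDerivWithinAt w' (w'' x) s x)
    (hφ : HasDerivWithinAt φ (φ' x) s x) (hφ' : HasDerivWithinAt φ' (φ'' x) s x) :
    HasDerivWithinAt (fun t => w t • φ' t - w' t • φ t) (w x • φ'' x - w'' x • φ x) s x := by
  refine ((hw.fun_smul hφ').fun_sub (hw'.fun_smul hφ)).congr_deriv ?_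
  abel

variable [CompleteSpace E]

theorem reductionOfOrder_const_add_eq_zero_iff (hab : a ≤ b) (hw : ContinuousOn w (Icc a b))
    (hw₀ : ∀ x ∈ Icc a b, w x ≠ 0) (hint : (∫ t in a..b, (w t ^ 2)⁻¹) ≠ 0)
    (hF : ContinuousOn F (Icc a b)) (A : E) :
    reductionOfOrder w (fun t => A + F t) a b = 0 ↔
      A = -(∫ t in a..b, (w t ^ 2)⁻¹)⁻¹ • ∫ t in a..b, (w t ^ 2)⁻¹ • F t := by
  have hsplit : ∫ t in a..b, (w t ^ 2)⁻¹ • (A + F t) =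
      (∫ t in a..b, (w t ^ 2)⁻¹) • A + ∫ t in a..b, (w t ^ 2)⁻¹ • F t := by
    simp only [smul_add]
    rw [intervalIntegral.integral_add
      ((continuousOn_inv_sq_smul hw hw₀ continuousOn_const).intervalIntegrable_of_Icc hab)
      ((continuousOn_inv_sq_smul hw hw₀ hF).intervalIntegrable_of_Icc hab),
      intervalIntegral.integral_smul_const]
  rw [reductionOfOrder, smul_eq_zero_iff_right (hw₀ b (right_mem_Icc.2 hab)), hsplit,
    add_eq_zero_iff_eq_neg, ← eq_inv_smul_iff₀ hint, smul_neg, neg_smul]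

variable [IsScalarTower ℝ 𝕜 E]

theorem hasDerivWithinAt_reductionOfOrder
    (hw : ∀ x ∈ Icc a b, HasDerivWithinAt w (w' x) (Icc a b) x)
    (hw₀ : ∀ x ∈ Icc a b, w x ≠ 0) (hF : ContinuousOn F (Icc a b)) (hx : x ∈ Icc a b) :
    HasDerivWithinAt (reductionOfOrder w F a)
      (w' x • (∫ t in a..x, (w t ^ 2)⁻¹ • F t) + (w x)⁻¹ • F x) (Icc a b) x := by
  have hcont := continuousOn_inv_sq_smul (HasDerivWithinAt.continuousOn hw) hw₀ hF
  refine ((hw x hx).fun_smul (hasDerivWithinAt_integral_Icc hcont hx)).congr_deriv ?_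
  have hwx := hw₀ x hx
  match_scalars <;> field_simp

theorem hasDerivWithinAt_deriv_reductionOfOrder
    (hw : ∀ x ∈ Icc a b, HasDerivWithinAt w (w' x) (Icc a b) x)
    (hw' : ∀ x ∈ Icc a b, HasDerivWithinAt w' (w'' x) (Icc a b) x)
    (hw₀ : ∀ x ∈ Icc a b, w x ≠ 0) (hF : ∀ x ∈ Icc a b, HasDerivWithinAt F (h x) (Icc a b) x)
    (hx : x ∈ Icc a b) :
    HasDerivWithinAt (fun u => w' u • (∫ t in a..u, (w t ^ 2)⁻¹ • F t) + (w u)⁻¹ • F u)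
      (w'' x • (∫ t in a..x, (w t ^ 2)⁻¹ • F t) + (w x)⁻¹ • h x) (Icc a b) x := by
  have hcont := continuousOn_inv_sq_smul (HasDerivWithinAt.continuousOn hw) hw₀
    (HasDerivWithinAt.continuousOn hF)
  refine (((hw' x hx).fun_smul (hasDerivWithinAt_integral_Icc hcont hx)).fun_add
    (((hw x hx).fun_inv (hw₀ x hx)).fun_smul (hF x hx))).congr_deriv ?_
  have hwx := hw₀ x hx
  match_scalars <;> field_simp
  ring

theorem eqOn_reductionOfOrder_wronskian
    (hw : ∀ x ∈ Icc a b, HasDerivWithinAt w (w' x) (Icc a b) x) (hw' : ContinuousOn w' (Icc a b))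
    (hw₀ : ∀ x ∈ Icc a b, w x ≠ 0) (hφ : ∀ x ∈ Icc a b, HasDerivWithinAt φ (φ' x) (Icc a b) x)
    (hφ' : ContinuousOn φ' (Icc a b)) (hφa : φ a = 0) :
    EqOn φ (reductionOfOrder w (fun t => w t • φ' t - w' t • φ t) a) (Icc a b) := by
  have hw_cont := HasDerivWithinAt.continuousOn hw
  have hcont := continuousOn_inv_sq_smul hw_cont hw₀
    ((hw_cont.smul hφ').sub (hw'.smul (HasDerivWithinAt.continuousOn hφ)))
  have hquot : ∀ x ∈ Icc a b, HasDerivWithinAt (fun t => (w t)⁻¹ • φ t)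
      ((w x ^ 2)⁻¹ • (w x • φ' x - w' x • φ x)) (Icc a b) x := fun x hx => by
    refine (((hw x hx).fun_inv (hw₀ x hx)).fun_smul (hφ x hx)).congr_deriv ?_
    have hwx := hw₀ x hx
    match_scalars <;> field_simp
  intro x hx
  have hprim := eq_add_integral_of_hasDerivWithinAt hquot hcont hx
  rw [hφa, smul_zero, zero_add] at hprim
  exact (inv_smul_eq_iff₀ (hw₀ x hx)).1 hprim

theorem isRayleighSolution_reductionOfOrder (hab : a < b) (hw : ContDiffOn ℝ 2 w (Icc a b))
    (hw₀ : ∀ x ∈ Icc a b, w x ≠ 0) (hF : ∀ x ∈ Icc a b, HasDerivWithinAt F (h x) (Icc a b) x)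
    (hh : ContinuousOn h (Icc a b)) (hb : reductionOfOrder w F a b = 0) :
    IsRayleighSolution w h a b (reductionOfOrder w F a) := by
  have hs := uniqueDiffOn_Icc hab
  obtain ⟨w', w'', hw₁, hw₂, hw''⟩ := (contDiffOn_two_iff_exists_hasDerivWithinAt hs).1 hw
  have hF_cont := HasDerivWithinAt.continuousOn hF
  have hφ₁ := fun x (hx : x ∈ Icc a b) => hasDerivWithinAt_reductionOfOrder hw₁ hw₀ hF_cont hx
  have hφ₂ := fun x (hx : x ∈ Icc a b) =>
    hasDerivWithinAt_deriv_reductionOfOrder hw₁ hw₂ hw₀ hF hx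
  have hφ'' := (hw''.smul (continuousOn_integral_Icc (continuousOn_inv_sq_smul hw.continuousOn hw₀
    hF_cont))).add ((hw.continuousOn.inv₀ hw₀).smul hh)
  refine ⟨(contDiffOn_two_iff_exists_hasDerivWithinAt hs).2 ⟨_, _, hφ₁, hφ₂, hφ''⟩,
    reductionOfOrder_left, hb, fun x hx => ?_⟩
  rw [derivWithin_derivWithin_eqOn hs hφ₁ hφ₂ hx, derivWithin_derivWithin_eqOn hs hw₁ hw₂ hx,
    reductionOfOrder]
  have hwx := hw₀ x hx
  match_scalars <;> field_simp
  ring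

theorem IsRayleighSolution.exists_eqOn_reductionOfOrder (hφ : IsRayleighSolution w h a b φ)
    (hab : a < b) (hw : ContDiffOn ℝ 2 w (Icc a b)) (hw₀ : ∀ x ∈ Icc a b, w x ≠ 0)
    (hh : ContinuousOn h (Icc a b)) :
    ∃ A : E, EqOn φ (reductionOfOrder w (fun t => A + ∫ r in a..t, h r) a) (Icc a b) := by
  have hs := uniqueDiffOn_Icc hab
  obtain ⟨w', w'', hw₁, hw₂, -⟩ := (contDiffOn_two_iff_exists_hasDerivWithinAt hs).1 hw
  obtain ⟨φ', φ'', hφ₁, hφ₂, -⟩ := (contDiffOn_two_iff_exists_hasDerivWithinAt hs).1 hφ.contDiffOn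
  have hwronskian : ∀ x ∈ Icc a b,
      HasDerivWithinAt (fun t => w t • φ' t - w' t • φ t) (h x) (Icc a b) x := fun x hx => by
    rw [← hφ.equation x hx, derivWithin_derivWithin_eqOn hs hφ₁ hφ₂ hx,
      derivWithin_derivWithin_eqOn hs hw₁ hw₂ hx]
    exact hasDerivWithinAt_wronskian (hw₁ x hx) (hw₂ x hx) (hφ₁ x hx) (hφ₂ x hx)
  refine ⟨w a • φ' a - w' a • φ a, fun x hx => ?_⟩
  rw [eqOn_reductionOfOrder_wronskian hw₁ (HasDerivWithinAt.continuousOn hw₂) hw₀ hφ₁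
    (HasDerivWithinAt.continuousOn hφ₂) hφ.left hx]
  refine congrArg (w x • ·) (intervalIntegral.integral_congr fun t ht => ?_)
  rw [uIcc_of_le hx.1] at ht
  exact congrArg _ (eq_add_integral_of_hasDerivWithinAt hwronskian hh
    (Icc_subset_Icc_right hx.2 ht))

theorem rayleigh_bvp_existence_uniqueness_general (hab : a < b) (hw : ContDiffOn ℝ 2 w (Icc a b))
    (hw₀ : ∀ x ∈ Icc a b, w x ≠ 0) (hint : (∫ t in a..b, (w t ^ 2)⁻¹) ≠ 0)
    (hh : ContinuousOn h (Icc a b)) :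
    ∃ φ : ℝ → E, IsRayleighSolution w h a b φ ∧
      ∀ ψ : ℝ → E, IsRayleighSolution w h a b ψ → EqOn ψ φ (Icc a b) := by
  have hright := reductionOfOrder_const_add_eq_zero_iff hab.le hw.continuousOn hw₀ hint
    (continuousOn_integral_Icc hh)
  refine ⟨_, isRayleighSolution_reductionOfOrder hab hw hw₀
    (fun x hx => (hasDerivWithinAt_integral_Icc hh hx).const_add _) hh ((hright _).2 rfl), ?_⟩
  intro ψ hψ
  obtain ⟨A, hA⟩ := hψ.exists_eqOn_reductionOfOrder hab hw hw₀ hh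
  have hAb : reductionOfOrder w (fun t => A + ∫ r in a..t, h r) a b = 0 :=
    (hA (right_mem_Icc.2 hab.le)).symm.trans hψ.right
  rwa [(hright A).1 hAb] at hA

end ReductionOfOrder

section Profile

variable {U : ℝ → ℝ}

theorem dI_dI_ofReal_sub_const (hU : ContDiffOn ℝ 2 U (Icc (-1) 1)) (c : ℂ) :
    EqOn (dI (dI fun z => (U z : ℂ) - c)) (fun z => (ddU U z : ℂ)) (Icc (-1) 1) := by
  have hs : UniqueDiffOn ℝ (Icc (-1 : ℝ) 1) := uniqueDiffOn_Icc (by norm_num)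
  obtain ⟨U', U'', hU₁, hU₂, -⟩ := (contDiffOn_two_iff_exists_hasDerivWithinAt hs).1 hU
  have hddU : EqOn (ddU U) U'' (Icc (-1) 1) := derivWithin_derivWithin_eqOn hs hU₁ hU₂
  intro z hz
  simp only [hddU hz]
  exact derivWithin_derivWithin_eqOn hs (fun x hx => (hU₁ x hx).ofReal_comp.sub_const c)
    (fun x hx => (hU₂ x hx).ofReal_comp) hz

theorem isRayleighSolution_ofReal_sub_const_iff (hU : ContDiffOn ℝ 2 U (Icc (-1) 1)) (c : ℂ)
    (h φ : ℝ → ℂ) :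
    IsRayleighSolution (fun z => (U z : ℂ) - c) h (-1) 1 φ ↔
      ContDiffOn ℝ 2 φ (Icc (-1) 1) ∧ φ (-1) = 0 ∧ φ 1 = 0 ∧
        ∀ z ∈ Icc (-1 : ℝ) 1, ((U z : ℂ) - c) * dI (dI φ) z - (ddU U z : ℂ) * φ z = h z := by
  have hequation : (∀ z ∈ Icc (-1 : ℝ) 1, ((U z : ℂ) - c) * dI (dI φ) z -
        dI (dI fun z => (U z : ℂ) - c) z * φ z = h z) ↔
      ∀ z ∈ Icc (-1 : ℝ) 1, ((U z : ℂ) - c) * dI (dI φ) z - (ddU U z : ℂ) * φ z = h z :=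
    forall₂_congr fun z hz => by rw [dI_dI_ofReal_sub_const hU c hz]
  rw [← hequation]
  exact ⟨fun ⟨hC2, hleft, hright, heq⟩ => ⟨hC2, hleft, hright, heq⟩,
    fun ⟨hC2, hleft, hright, heq⟩ => ⟨hC2, hleft, hright, heq⟩⟩

theorem contDiffOn_ofReal_sub_const {n : WithTop ℕ∞} {s : Set ℝ} (hU : ContDiffOn ℝ n U s) (c : ℂ) :
    ContDiffOn ℝ n (fun z => (U z : ℂ) - c) s :=
  (Complex.ofRealCLM.contDiff.comp_contDiffOn hU).sub contDiffOn_const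

theorem ofReal_sub_ne_zero {c : ℂ} (hc : c.im ≠ 0) (r : ℝ) : (r : ℂ) - c ≠ 0 := fun hr =>
  hc (by simpa using congrArg Complex.im hr)

end Profile

/-- Solvability of the nonhomogeneous Rayleigh boundary value problem: if
`∫_{-1}^{1} (U(z) - c)⁻² dz ≠ 0` and `h` is continuous, there is a unique `C²` function
`φ : [-1,1] → ℂ` with `φ(±1) = 0` and `(U(z) - c)·φ″(z) - U″(z)·φ(z) = h(z)` on `[-1,1]`. -/
theorem rayleigh_bvp_existence_uniqueness (U : ℝ → ℝ)
    (hU : ContDiffOn ℝ 2 U (Set.Icc (-1) 1)) (c : ℂ) (hc : c.im ≠ 0)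
    (hdisp : (∫ z in (-1:ℝ)..1, (((U z : ℂ) - c) ^ 2)⁻¹) ≠ 0)
    (h : ℝ → ℂ) (hh : ContinuousOn h (Set.Icc (-1) 1)) :
    ∃ φ : ℝ → ℂ,
      (ContDiffOn ℝ 2 φ (Set.Icc (-1) 1) ∧ φ (-1) = 0 ∧ φ 1 = 0 ∧
        ∀ z ∈ Set.Icc (-1:ℝ) 1,
          ((U z : ℂ) - c) * dI (dI φ) z - (ddU U z : ℂ) * φ z = h z) ∧
      ∀ ψ : ℝ → ℂ,
        (ContDiffOn ℝ 2 ψ (Set.Icc (-1) 1) ∧ ψ (-1) = 0 ∧ ψ 1 = 0 ∧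
          ∀ z ∈ Set.Icc (-1:ℝ) 1,
            ((U z : ℂ) - c) * dI (dI ψ) z - (ddU U z : ℂ) * ψ z = h z) →
        Set.EqOn ψ φ (Set.Icc (-1) 1) := by
  simpa only [isRayleighSolution_ofReal_sub_const_iff hU c] using
    rayleigh_bvp_existence_uniqueness_general (by norm_num) (contDiffOn_ofReal_sub_const hU c)
      (fun z _ => ofReal_sub_ne_zero hc (U z)) hdisp hh

end
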